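/- The intersection of the Markov spectrum M with the open interval ((11+35√87)/102, (56508+2716√87)/24687) consists of exactly one point, namely √33245/55, which is therefore an isolated point of M. Moreover, both endpoints (11+35√87)/102 and (56508+2716√87)/24687 belong to M. -/

import Mathlib

open Filter Set MeasureTheory
open scoped ENNReal

/-- Finite continued fraction `[a 0; a 1, ..., a n]`. -/
noncomputable def cfConv : (ℕ → ℝ) → ℕ → ℝ
  | a, 0 => a 0
  | a, n + 1 => a 0 + 1 / cfConv (fun i => a (i + 1)) n

/-- Value of the infinite continued fraction `[a 0; a 1, a 2, ...]`,
as the limit of its convergents. -/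
noncomputable def cfVal (a : ℕ → ℝ) : ℝ := limUnder atTop (cfConv a)

/-- `λ_k(α) = [α_k; α_{k+1}, ...] + [0; α_{k-1}, α_{k-2}, ...]`. -/
noncomputable def lambdaVal (α : ℤ → ℕ) (k : ℤ) : ℝ :=
  cfVal (fun n => (α (k + n) : ℝ)) +
  cfVal (fun n => if n = 0 then 0 else (α (k - n) : ℝ))

/-- The Markov value `m(α) = sup_{k ∈ ℤ} λ_k(α)`. -/
noncomputable def markovValue (α : ℤ → ℕ) : ℝ := ⨆ k : ℤ, lambdaVal α k

/-- The Markov spectrum. -/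
def markovSpectrum : Set ℝ :=
  { x | ∃ α : ℤ → ℕ, (∀ n, 0 < α n) ∧ BddAbove (range (lambdaVal α)) ∧
      markovValue α = x }

/-- The dimension function `d(t) = dim_H (M ∩ (-∞, t))`. -/
noncomputable def dimFun (t : ℝ) : ℝ≥0∞ := dimH (markovSpectrum ∩ Iio t)

/-! ### Convergence of continued fractions -/

lemma cfConv_mem_Icc (n : ℕ) : ∀ a : ℕ → ℝ, (∀ i, 1 ≤ a i) →
    cfConv a n ∈ Icc (a 0) (a 0 + 1) := by
  induction n with
  | zero => intro a _; exact ⟨le_rfl, by simp [cfConv]⟩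
  | succ n ih =>
    intro a ha
    obtain ⟨h, -⟩ := ih (fun i => a (i + 1)) fun i => ha _
    have h1 : 1 ≤ cfConv (fun i => a (i + 1)) n := (ha 1).trans h
    constructor
    · have : 0 ≤ 1 / cfConv (fun i => a (i + 1)) n := by positivity
      simp only [cfConv]; linarith
    · have := div_le_one_of_le₀ h1 (by linarith)
      simp only [cfConv]; linarith

lemma abs_cfConv_sub_le (j : ℕ) : ∀ a : ℕ → ℝ, (∀ i, 1 ≤ a i) → ∀ m n,
    |cfConv a (2 * j + m) - cfConv a (2 * j + n)| ≤ (1 / 4) ^ j := by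
  induction j with
  | zero =>
    intro a ha m n
    obtain ⟨h1, h2⟩ := cfConv_mem_Icc m a ha
    obtain ⟨h3, h4⟩ := cfConv_mem_Icc n a ha
    simp only [mul_zero, zero_add, pow_zero, abs_le]
    constructor <;> linarith
  | succ j ih =>
    intro a ha m n
    have hshift : ∀ i, 1 ≤ a (i + 1 + 1) := fun i => ha _
    have hd := ih (fun i => a (i + 1 + 1)) hshift m n
    have hX := (hshift 0).trans (cfConv_mem_Icc (2 * j + m) _ hshift).1
    have hY := (hshift 0).trans (cfConv_mem_Icc (2 * j + n) _ hshift).1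
    rw [show 2 * (j + 1) + m = 2 * j + m + 1 + 1 by ring,
      show 2 * (j + 1) + n = 2 * j + n + 1 + 1 by ring]
    simp only [cfConv]
    set X := cfConv (fun i => a (i + 1 + 1)) (2 * j + m)
    set Y := cfConv (fun i => a (i + 1 + 1)) (2 * j + n)
    have hb : 1 ≤ a (0 + 1) := ha _
    set b := a (0 + 1)
    have hbX : 2 ≤ b * X + 1 := by nlinarith
    have hbY : 2 ≤ b * Y + 1 := by nlinarith
    have key : a 0 + 1 / (b + 1 / X) - (a 0 + 1 / (b + 1 / Y))
        = (X - Y) / ((b * X + 1) * (b * Y + 1)) := by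
      have : X ≠ 0 := by positivity
      have : Y ≠ 0 := by positivity
      field_simp
      ring
    have hprod : 4 ≤ (b * X + 1) * (b * Y + 1) := by nlinarith
    rw [key, abs_div, abs_of_pos (by linarith : 0 < (b * X + 1) * (b * Y + 1)), pow_succ]
    rw [div_le_iff₀ (by linarith)]
    have : (0 : ℝ) ≤ (1 / 4) ^ j := by positivity
    nlinarith

lemma tendsto_cfConv {a : ℕ → ℝ} (ha : ∀ i, 1 ≤ a i) :
    Tendsto (cfConv a) atTop (nhds (cfVal a)) := by
  refine CauchySeq.tendsto_limUnder (Metric.cauchySeq_iff.2 fun ε hε => ?_)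
  obtain ⟨j, hj⟩ := exists_pow_lt_of_lt_one hε (by norm_num : (1 / 4 : ℝ) < 1)
  refine ⟨2 * j, fun m hm n hn => ?_⟩
  obtain ⟨m, rfl⟩ := Nat.exists_eq_add_of_le hm
  obtain ⟨n, rfl⟩ := Nat.exists_eq_add_of_le hn
  exact (abs_cfConv_sub_le j a ha m n).trans_lt hj

lemma one_le_cfVal {a : ℕ → ℝ} (ha : ∀ i, 1 ≤ a i) : 1 ≤ cfVal a :=
  ge_of_tendsto' (tendsto_cfConv ha) fun n => (ha 0).trans (cfConv_mem_Icc n a ha).1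

/-- The recursion of continued fractions; the leading term may be any real number. -/
lemma cfVal_eq {a : ℕ → ℝ} (ha : ∀ i, 1 ≤ a (i + 1)) :
    cfVal a = a 0 + 1 / cfVal (fun i => a (i + 1)) := by
  have h := tendsto_cfConv ha
  have h0 : cfVal (fun i => a (i + 1)) ≠ 0 := by linarith [one_le_cfVal ha]
  refine Tendsto.limUnder_eq ((tendsto_add_atTop_iff_nat 1).1 ?_)
  exact (tendsto_const_nhds.div h h0).const_add (a 0)

/-! ### Translations and reflections of bi-infinite sequences -/

/-- The sequence `α` re-centred at position `k`. -/
def recenter (k : ℤ) (α : ℤ → ℕ) : ℤ → ℕ := fun n => α (n + k)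

/-- The sequence `α` read backwards. -/
def reflect (α : ℤ → ℕ) : ℤ → ℕ := fun n => α (-n)

/-- The continued fraction `[α 0; α 1, α 2, ...]`. -/
noncomputable def rightCF (α : ℤ → ℕ) : ℝ := cfVal (fun n => (α n : ℝ))

@[simp] lemma recenter_apply (k : ℤ) (α : ℤ → ℕ) (n : ℤ) : recenter k α n = α (n + k) := rfl

@[simp] lemma reflect_apply (α : ℤ → ℕ) (n : ℤ) : reflect α n = α (-n) := rfl

@[simp] lemma reflect_reflect (α : ℤ → ℕ) : reflect (reflect α) = α := by
  ext n; simp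

@[simp] lemma recenter_zero (α : ℤ → ℕ) : recenter 0 α = α := by
  ext n; simp

@[simp] lemma recenter_recenter (j k : ℤ) (α : ℤ → ℕ) :
    recenter j (recenter k α) = recenter (j + k) α := by
  ext n; simp [add_assoc]

lemma reflect_recenter (k : ℤ) (α : ℤ → ℕ) :
    reflect (recenter k α) = recenter (-k) (reflect α) := by
  ext n; simp [add_comm]

lemma rightCF_congr {α β : ℤ → ℕ} (h : ∀ n : ℕ, α n = β n) : rightCF α = rightCF β := by
  simp only [rightCF, h]

lemma one_le_rightCF {α : ℤ → ℕ} (hα : ∀ n, 0 < α n) : 1 ≤ rightCF α :=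
  one_le_cfVal fun i => by exact_mod_cast hα i

lemma rightCF_eq {α : ℤ → ℕ} (hα : ∀ n, 0 < α n) :
    rightCF α = α 0 + 1 / rightCF (recenter 1 α) := by
  rw [rightCF, cfVal_eq fun i => by exact_mod_cast hα _]
  simp [rightCF]

lemma lambdaVal_eq {α : ℤ → ℕ} (hα : ∀ n, 0 < α n) (k : ℤ) :
    lambdaVal α k = rightCF (recenter k α) + 1 / rightCF (reflect (recenter (k - 1) α)) := by
  have hleft : ∀ i : ℕ, (1 : ℝ) ≤ (if i + 1 = 0 then 0 else (α (k - (i + 1 : ℕ)) : ℝ)) := by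
    intro i
    simpa using Nat.succ_le_of_lt (hα _)
  rw [lambdaVal, cfVal_eq (a := fun n : ℕ => if n = 0 then 0 else (α (k - n) : ℝ)) hleft]
  simp [rightCF, add_comm, sub_eq_add_neg, add_left_comm]

lemma lambdaVal_add {α : ℤ → ℕ} (hα : ∀ n, 0 < α n) (k : ℤ) :
    lambdaVal α k + α k = rightCF (recenter k α) + rightCF (reflect (recenter k α)) := by
  rw [lambdaVal_eq hα, rightCF_eq (α := reflect (recenter k α)) fun n => hα _]
  simp [reflect_recenter, add_comm, sub_eq_add_neg]
  ring

lemma lambdaVal_recenter {α : ℤ → ℕ} (hα : ∀ n, 0 < α n) (j k : ℤ) :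
    lambdaVal (recenter j α) k = lambdaVal α (k + j) := by
  have h1 := lambdaVal_add (α := recenter j α) (fun n => hα _) k
  have h2 := lambdaVal_add hα (k + j)
  simp only [recenter_recenter, recenter_apply] at h1
  linarith

lemma lambdaVal_reflect {α : ℤ → ℕ} (hα : ∀ n, 0 < α n) (k : ℤ) :
    lambdaVal (reflect α) k = lambdaVal α (-k) := by
  have h1 := lambdaVal_add (α := reflect α) (fun n => hα _) k
  have h2 := lambdaVal_add hα (-k)
  rw [reflect_recenter, reflect_reflect] at h1
  rw [reflect_recenter, neg_neg] at h2
  simp only [reflect_apply] at h1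
  linarith

lemma markovValue_recenter {α : ℤ → ℕ} (hα : ∀ n, 0 < α n) (j : ℤ) :
    markovValue (recenter j α) = markovValue α := by
  simp only [markovValue, lambdaVal_recenter hα]
  exact (Equiv.addRight j).iSup_comp (g := lambdaVal α)

lemma markovValue_reflect {α : ℤ → ℕ} (hα : ∀ n, 0 < α n) :
    markovValue (reflect α) = markovValue α := by
  simp only [markovValue, lambdaVal_reflect hα]
  exact (Equiv.neg ℤ).iSup_comp (g := lambdaVal α)

/-! ### Rational bounds for continued fractions with partial quotients `1` and `2` -/

/-- All entries of `α` are `1` or `2`. -/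
def IsBinary (α : ℤ → ℕ) : Prop := ∀ n, α n = 1 ∨ α n = 2

namespace IsBinary

variable {α : ℤ → ℕ}

lemma pos (h : IsBinary α) (n : ℤ) : 0 < α n := by
  rcases h n with h | h <;> omega

lemma recentered (h : IsBinary α) (k : ℤ) : IsBinary (recenter k α) := fun _ => h _

lemma reflected (h : IsBinary α) : IsBinary (reflect α) := fun _ => h _

lemma eq_one (h : IsBinary α) {n : ℤ} (hn : α n ≠ 2) : α n = 1 := (h n).resolve_right hn

lemma eq_two (h : IsBinary α) {n : ℤ} (hn : α n ≠ 1) : α n = 2 := (h n).resolve_left hn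

lemma le_rightCF_of_forall_le {M : ℝ} (hM : ∀ α, IsBinary α → rightCF α ≤ M) (h : IsBinary α) :
    1 + 1 / M ≤ rightCF α := by
  rw [rightCF_eq h.pos]
  have h1 := one_le_rightCF (h.recentered 1).pos
  have h2 := one_div_le_one_div_of_le (by linarith) (hM _ (h.recentered 1))
  have h3 : (1 : ℝ) ≤ α 0 := by exact_mod_cast h.pos 0
  linarith

lemma rightCF_le_of_forall_le {m : ℝ} (hm : 0 < m) (hR : ∀ α, IsBinary α → m ≤ rightCF α)
    (h : IsBinary α) : rightCF α ≤ 2 + 1 / m := by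
  rw [rightCF_eq h.pos]
  have h2 := one_div_le_one_div_of_le hm (hR _ (h.recentered 1))
  have h3 : (α 0 : ℝ) ≤ 2 := by rcases h 0 with h | h <;> simp [h]
  linarith

lemma rightCF_mem_Icc (h : IsBinary α) : rightCF α ∈ Icc (1.366 : ℝ) 2.7321 := by
  have a0 : ∀ α, IsBinary α → (1 : ℝ) ≤ rightCF α := fun α h => one_le_rightCF h.pos
  have improve : ∀ {m : ℝ}, 0 < m → (∀ α, IsBinary α → m ≤ rightCF α) →
      ∀ α, IsBinary α → 1 + 1 / (2 + 1 / m) ≤ rightCF α := fun hm hR α h =>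
    h.le_rightCF_of_forall_le fun β hβ => hβ.rightCF_le_of_forall_le hm hR
  have a4 := improve (by norm_num) (improve (by norm_num) (improve (by norm_num)
    (improve one_pos a0)))
  constructor
  · exact le_trans (by norm_num) (a4 α h)
  · exact (h.rightCF_le_of_forall_le (by norm_num) a4).trans (by norm_num)

end IsBinary

/-- `α` starts with the word `l` from position `0` on. -/
def Reads : (ℤ → ℕ) → List ℕ → Prop
  | _, [] => True
  | α, a :: l => α 0 = a ∧ Reads (recenter 1 α) l

/-- The value `[a₀; a₁, ..., aₙ, x]` or `[a₀; a₁, ..., aₙ, y]`, whichever is smaller when `x ≤ y`,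
according to the parity of the length. -/
noncomputable def wordBound : ℝ → ℝ → List ℕ → ℝ
  | x, _, [] => x
  | x, y, a :: l => a + 1 / wordBound y x l

/-- Lower bound for binary continued fractions starting with a given word. -/
noncomputable abbrev lowerBound : List ℕ → ℝ := wordBound 1.366 2.7321

/-- Upper bound for binary continued fractions starting with a given word. -/
noncomputable abbrev upperBound : List ℕ → ℝ := wordBound 2.7321 1.366

lemma wordBound_pos {x y : ℝ} (hx : 0 < x) (hy : 0 < y) (l : List ℕ) : 0 < wordBound x y l := by
  induction l generalizing x y with
  | nil => exact hx
  | cons a l ih => have := ih hy hx; simp only [wordBound]; positivity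

lemma IsBinary.rightCF_mem_Icc_of_reads {α : ℤ → ℕ} (h : IsBinary α) {l : List ℕ}
    (hl : Reads α l) : rightCF α ∈ Icc (lowerBound l) (upperBound l) := by
  induction l generalizing α with
  | nil => exact h.rightCF_mem_Icc
  | cons a l ih =>
    obtain ⟨h0, hl⟩ := hl
    obtain ⟨h1, h2⟩ := ih (h.recentered 1) hl
    have hpos : 0 < lowerBound l := wordBound_pos (by norm_num) (by norm_num) l
    rw [rightCF_eq h.pos, h0]
    exact ⟨add_le_add le_rfl (one_div_le_one_div_of_le (hpos.trans_le h1) h2),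
      add_le_add le_rfl (one_div_le_one_div_of_le hpos h1)⟩

lemma IsBinary.lambdaVal_mem_Icc {α : ℤ → ℕ} (h : IsBinary α) {k : ℤ} {u v : List ℕ}
    (hu : Reads (reflect (recenter (k - 1) α)) u) (hv : Reads (recenter k α) v) :
    lambdaVal α k ∈ Icc (lowerBound v + 1 / upperBound u) (upperBound v + 1 / lowerBound u) := by
  obtain ⟨h1, h2⟩ := (h.recentered (k - 1)).reflected.rightCF_mem_Icc_of_reads hu
  obtain ⟨h3, h4⟩ := (h.recentered k).rightCF_mem_Icc_of_reads hv
  have hpos : 0 < lowerBound u := wordBound_pos (by norm_num) (by norm_num) u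
  rw [lambdaVal_eq h.pos]
  exact ⟨add_le_add h3 (one_div_le_one_div_of_le (hpos.trans_le h1) h2),
    add_le_add h4 (one_div_le_one_div_of_le hpos h1)⟩

/-! ### The constants -/

/-- The left end of the gap. -/
noncomputable def gapLeft : ℝ := (11 + 35 * √87) / 102

/-- The right end of the gap. -/
noncomputable def gapRight : ℝ := (56508 + 2716 * √87) / 24687

/-- The value of the periodic continued fraction with period `2, 2, 1, 2, 1, 1`. -/
noncomputable def tailValue : ℝ := (17 + 3 * √87) / 19

lemma sqrt_87_bounds : 9.327379 < √87 ∧ √87 < 9.3273791 :=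
  ⟨Real.lt_sqrt_of_sq_lt (by norm_num), (Real.sqrt_lt' (by norm_num)).2 (by norm_num)⟩

lemma lt_gapLeft : 3.3084 < gapLeft := by
  have := sqrt_87_bounds.1
  rw [gapLeft]; linarith

lemma gapLeft_lt : gapLeft < 3.309 := by
  have := sqrt_87_bounds.2
  rw [gapLeft]; linarith

lemma lt_gapRight : 3.31515 < gapRight := by
  have := sqrt_87_bounds.1
  rw [gapRight]; linarith

lemma gapRight_lt : gapRight < 3.315153 := by
  have := sqrt_87_bounds.2
  rw [gapRight]; linarith

lemma tailValue_bounds : 2.367 < tailValue ∧ tailValue < 2.368 := by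
  have := sqrt_87_bounds
  rw [tailValue]; constructor <;> linarith

lemma tailValue_fixed :
    2 + 1 / (2 + 1 / (1 + 1 / (2 + 1 / (1 + 1 / (1 + 1 / tailValue))))) = tailValue := by
  have hs : √87 ^ 2 = 87 := Real.sq_sqrt (by norm_num)
  have hpos := tailValue_bounds.1
  have hq : 19 * tailValue ^ 2 - 34 * tailValue - 26 = 0 := by
    rw [tailValue]; linear_combination (9 / 19) * hs
  have : 0 < tailValue := by linarith
  field_simp
  linear_combination (-1) * hq

lemma gapLeft_eq : gapLeft =
    2 + 1 / (1 + 1 / (1 + 1 / tailValue)) +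
      1 / (1 + 1 / (2 + 1 / (1 + 1 / (1 + 1 / tailValue)))) := by
  have hs : √87 ^ 2 = 87 := Real.sq_sqrt (by norm_num)
  rw [tailValue, gapLeft]
  field_simp
  ring_nf
  simp only [show √87 ^ 3 = √87 ^ 2 * √87 by ring, hs]
  ring

lemma gapRight_eq : gapRight =
    2 + 1 / (1 + 1 / tailValue) +
      1 / (1 + 1 / (1 + 1 / (1 + 1 / (1 + 1 / (2 + 1 / (1 + 1 / tailValue)))))) := by
  have hs : √87 ^ 2 = 87 := Real.sq_sqrt (by norm_num)
  rw [tailValue, gapRight]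
  field_simp
  ring_nf
  simp only [show √87 ^ 3 = √87 ^ 2 * √87 by ring, hs]
  ring

/-! ### Admissible sequences -/

lemma IsBinary.rightCF_eq_wordBound {α : ℤ → ℕ} (h : IsBinary α) {l : List ℕ} (hl : Reads α l) :
    rightCF α = wordBound (rightCF (recenter l.length α)) (rightCF (recenter l.length α)) l := by
  induction l generalizing α with
  | nil => simp [wordBound]
  | cons a l ih =>
    rw [rightCF_eq h.pos, hl.1, ih (h.recentered 1) hl.2]
    simp [wordBound]

/-- Binary sequences all of whose values `λ_k` lie below the right end of the gap. -/
structure IsAdmissible (α : ℤ → ℕ) : Prop where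
  binary : IsBinary α
  lambdaVal_lt : ∀ k, lambdaVal α k < gapRight

namespace IsAdmissible

variable {α : ℤ → ℕ}

lemma recentered (h : IsAdmissible α) (k : ℤ) : IsAdmissible (recenter k α) :=
  ⟨h.binary.recentered k, fun j => by
    rw [lambdaVal_recenter h.binary.pos]; exact h.lambdaVal_lt _⟩

lemma reflected (h : IsAdmissible α) : IsAdmissible (reflect α) :=
  ⟨h.binary.reflected, fun j => by
    rw [lambdaVal_reflect h.binary.pos]; exact h.lambdaVal_lt _⟩

lemma false_of_reads (h : IsAdmissible α) (u v : List ℕ)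
    (hu : Reads (reflect (recenter (0 - 1) α)) u) (hv : Reads (recenter 0 α) v)
    (huv : 3.315153 ≤ lowerBound v + 1 / upperBound u) : False :=
  absurd (h.lambdaVal_lt 0)
    (by linarith [gapRight_lt, (h.binary.lambdaVal_mem_Icc hu hv).1])

/-- The word `21212` does not occur. -/
lemma not_two_one_two_one_two (h : IsAdmissible α) (h₂ : α (-2) = 2) (h₁ : α (-1) = 1)
    (h0 : α 0 = 2) (h1 : α 1 = 1) : α 2 = 1 := by
  refine h.binary.eq_one fun h2 => h.false_of_reads [1, 2] [2, 1, 2]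
    ⟨h₁, h₂, trivial⟩ ⟨h0, h1, h2, trivial⟩ ?_
  norm_num [wordBound]

/-- The word `112212111` does not occur. -/
lemma not_one_one_two_two_one_two_one_one_one (h : IsAdmissible α) (h₅ : α (-5) = 1)
    (h₄ : α (-4) = 1) (h₃ : α (-3) = 2) (h₂ : α (-2) = 2) (h₁ : α (-1) = 1) (h0 : α 0 = 2)
    (h1 : α 1 = 1) (h2 : α 2 = 1) : α 3 = 2 := by
  refine h.binary.eq_two fun h3 => h.false_of_reads [1, 2, 2, 1, 1] [2, 1, 1, 1]
    ⟨h₁, h₂, h₃, h₄, h₅, trivial⟩ ⟨h0, h1, h2, h3, trivial⟩ ?_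
  norm_num [wordBound]

lemma sub_le_rightCF (n : ℕ) : ∀ {α : ℤ → ℕ}, IsAdmissible α → α (-2) = 1 → α (-1) = 1 →
    α 0 = 2 → tailValue - (1 / 4) ^ n ≤ rightCF α := by
  obtain ⟨hT₁, hT₂⟩ := tailValue_bounds
  induction n with
  | zero =>
    intro α h _ _ h0
    have := (h.binary.rightCF_mem_Icc_of_reads (l := [2]) ⟨h0, trivial⟩).1
    norm_num [wordBound] at this ⊢
    linarith
  | succ n ih =>
    intro α h h₂ h₁ h0
    by_contra! hlt
    have hlt' : rightCF α < 2.368 := by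
      have : (0 : ℝ) ≤ (1 / 4) ^ (n + 1) := by positivity
      linarith
    have low : ∀ l, Reads α l → 2.368 ≤ lowerBound l → False := fun l hl hb => by
      linarith [(h.binary.rightCF_mem_Icc_of_reads hl).1]
    have h1 : α 1 = 2 := h.binary.eq_two fun h1 =>
      low [2, 1] ⟨h0, h1, trivial⟩ (by norm_num [wordBound])
    have h2 : α 2 = 1 := h.binary.eq_one fun h2 =>
      low [2, 2, 2] ⟨h0, h1, h2, trivial⟩ (by norm_num [wordBound])
    have h3 : α 3 = 2 := h.binary.eq_two fun h3 =>
      low [2, 2, 1, 1] ⟨h0, h1, h2, h3, trivial⟩ (by norm_num [wordBound])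
    have h4 : α 4 = 1 := h.binary.eq_one fun h4 =>
      low [2, 2, 1, 2, 2] ⟨h0, h1, h2, h3, h4, trivial⟩ (by norm_num [wordBound])
    have h5 : α 5 = 1 := (h.recentered 3).not_two_one_two_one_two h1 h2 h3 h4
    have h6 : α 6 = 2 :=
      (h.recentered 3).not_one_one_two_two_one_two_one_one_one h₂ h₁ h0 h1 h2 h3 h4 h5
    have hx := ih (h.recentered 6) h4 h5 h6
    have heq := h.binary.rightCF_eq_wordBound (l := [2, 2, 1, 2, 1, 1])
      ⟨h0, h1, h2, h3, h4, h5, trivial⟩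
    have hx1 := one_le_rightCF (h.recentered 6).binary.pos
    simp only [wordBound, List.length, Nat.reduceAdd, Nat.cast_ofNat, Nat.cast_one] at heq
    set x := rightCF (recenter 6 α)
    have hdiff : tailValue - rightCF α
        = (tailValue - x) / ((19 * tailValue + 11) * (19 * x + 11)) := by
      have hT : 0 < tailValue := by linarith
      rw [heq]
      nth_rewrite 1 [← tailValue_fixed]
      field_simp
      ring
    have hprod : 4 ≤ (19 * tailValue + 11) * (19 * x + 11) := by nlinarith
    have hle : tailValue - rightCF α ≤ (1 / 4) ^ (n + 1) := by
      rw [hdiff, div_le_iff₀ (by linarith), pow_succ]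
      have : (0 : ℝ) ≤ (1 / 4) ^ n := by positivity
      nlinarith
    linarith

/-- In an admissible sequence, the tails that start with `2` just after `11` are minimal for the
periodic tail of period `221211`. -/
lemma tailValue_le_rightCF (h : IsAdmissible α) (h₂ : α (-2) = 1) (h₁ : α (-1) = 1)
    (h0 : α 0 = 2) : tailValue ≤ rightCF α := by
  have hlim : Tendsto (fun n : ℕ => tailValue - (1 / 4 : ℝ) ^ n) atTop (nhds (tailValue - 0)) :=
    (tendsto_pow_atTop_nhds_zero_of_lt_one (by norm_num) (by norm_num)).const_sub _
  rw [sub_zero] at hlim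
  exact le_of_tendsto' hlim fun n => sub_le_rightCF n h h₂ h₁ h0

end IsAdmissible

/-- The word `212111` occurs in `α`, with its second letter `2` at position `0`. -/
structure HasMarker (α : ℤ → ℕ) : Prop where
  at_neg_two : α (-2) = 2
  at_neg_one : α (-1) = 1
  at_zero : α 0 = 2
  at_one : α 1 = 1
  at_two : α 2 = 1
  at_three : α 3 = 1

/-- The context that the marker forces in an admissible sequence. -/
structure MarkerContext (α : ℤ → ℕ) : Prop extends HasMarker α where
  at_neg_seven : α (-7) = 1
  at_neg_six : α (-6) = 1
  at_neg_five : α (-5) = 2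
  at_neg_four : α (-4) = 1
  at_neg_three : α (-3) = 2
  at_four : α 4 = 1
  marker_five : HasMarker (reflect (recenter 5 α))

/-- `x + [0; 1, 1, 1, 1, x]` is increasing in `x`, and `[0; 1, 1, 1, 1, y]` is decreasing in `y`:
this bounds the larger one of the two tails around a word `1111`. -/
lemma gapRight_le_of_tail {x y : ℝ} (hy : 1 ≤ y) (hyx : y ≤ x)
    (hx : 2 + 1 / (1 + 1 / tailValue) ≤ x) :
    gapRight ≤ x + 1 / (1 + 1 / (1 + 1 / (1 + 1 / (1 + 1 / y)))) := by
  have hT := tailValue_bounds.1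
  rw [gapRight_eq]
  set c := 2 + 1 / (1 + 1 / tailValue)
  have hc : 1 ≤ c := by
    have : 0 < 1 / (1 + 1 / tailValue) := by positivity
    linarith
  have expand : ∀ z : ℝ, 1 ≤ z →
      1 / (1 + 1 / (1 + 1 / (1 + 1 / (1 + 1 / z)))) = 3 / 5 + 1 / (5 * (5 * z + 3)) := by
    intro z hz
    have : 0 < z := by linarith
    field_simp
    ring
  have hxy : 1 / (5 * (5 * x + 3)) ≤ 1 / (5 * (5 * y + 3)) :=
    one_div_le_one_div_of_le (by linarith) (by linarith)
  have hcx : 1 / (5 * (5 * c + 3)) - 1 / (5 * (5 * x + 3)) ≤ x - c := by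
    have : 1 / (5 * (5 * c + 3)) - 1 / (5 * (5 * x + 3))
        = (x - c) / ((5 * c + 3) * (5 * x + 3)) := by
      have : 0 < 5 * c + 3 := by linarith
      have : 0 < 5 * x + 3 := by linarith
      field_simp
      ring
    rw [this]
    refine div_le_self (by linarith) ?_
    nlinarith
  rw [expand c hc, expand y hy]
  linarith

namespace IsAdmissible

variable {α : ℤ → ℕ}

lemma at_neg_three_of_hasMarker (h : IsAdmissible α) (hm : HasMarker α) : α (-3) = 2 := by
  obtain ⟨h₂, h₁, h0, h1, h2, h3⟩ := hm
  refine h.binary.eq_two fun h₃ => h.false_of_reads [1, 2, 1] [2, 1, 1, 1]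
    ⟨h₁, h₂, h₃, trivial⟩ ⟨h0, h1, h2, h3, trivial⟩ ?_
  norm_num [wordBound]

lemma markerContext (h : IsAdmissible α) (hm : HasMarker α) : MarkerContext α := by
  have h₃ := h.at_neg_three_of_hasMarker hm
  obtain ⟨h₂, h₁, h0, h1, h2, h3⟩ := id hm
  have h4 : α 4 = 1 := h.binary.eq_one fun h4 => h.false_of_reads [1, 2, 2] [2, 1, 1, 1, 2]
    ⟨h₁, h₂, h₃, trivial⟩ ⟨h0, h1, h2, h3, h4, trivial⟩ (by norm_num [wordBound])
  have h₄ : α (-4) = 1 := h.binary.eq_one fun h₄ =>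
    h.false_of_reads [1, 2, 2, 2] [2, 1, 1, 1, 1] ⟨h₁, h₂, h₃, h₄, trivial⟩
      ⟨h0, h1, h2, h3, h4, trivial⟩ (by norm_num [wordBound])
  have h5 : α 5 = 2 := h.binary.eq_two fun h5 =>
    h.false_of_reads [1, 2, 2, 1] [2, 1, 1, 1, 1, 1] ⟨h₁, h₂, h₃, h₄, trivial⟩
      ⟨h0, h1, h2, h3, h4, h5, trivial⟩ (by norm_num [wordBound])
  have h₅ : α (-5) = 2 := h.binary.eq_two fun h₅ =>
    h.false_of_reads [1, 2, 2, 1, 1] [2, 1, 1, 1, 1, 2] ⟨h₁, h₂, h₃, h₄, h₅, trivial⟩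
      ⟨h0, h1, h2, h3, h4, h5, trivial⟩ (by norm_num [wordBound])
  have h6 : α 6 = 1 := h.binary.eq_one fun h6 =>
    h.false_of_reads [1, 2, 2, 1, 2] [2, 1, 1, 1, 1, 2, 2] ⟨h₁, h₂, h₃, h₄, h₅, trivial⟩
      ⟨h0, h1, h2, h3, h4, h5, h6, trivial⟩ (by norm_num [wordBound])
  have h₆ : α (-6) = 1 := h.binary.eq_one fun h₆ =>
    h.false_of_reads [1, 2, 2, 1, 2, 2] [2, 1, 1, 1, 1, 2, 1]
      ⟨h₁, h₂, h₃, h₄, h₅, h₆, trivial⟩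
      ⟨h0, h1, h2, h3, h4, h5, h6, trivial⟩ (by norm_num [wordBound])
  have h7 : α 7 = 2 := h.binary.eq_two fun h7 =>
    h.false_of_reads [1, 2, 2, 1, 2, 1] [2, 1, 1, 1, 1, 2, 1, 1]
      ⟨h₁, h₂, h₃, h₄, h₅, h₆, trivial⟩
      ⟨h0, h1, h2, h3, h4, h5, h6, h7, trivial⟩ (by norm_num [wordBound])
  have h₇ : α (-7) = 1 :=
    (h.reflected.recentered 5).not_two_one_two_one_two h₃ h₄ h₅ h₆
  exact ⟨hm, h₇, h₆, h₅, h₄, h₃, h4, ⟨h7, h6, h5, h4, h3, h2⟩⟩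

lemma rightCF_lt_of_markerContext (h : IsAdmissible α) (hm : MarkerContext α) :
    rightCF (recenter 5 α) < 2 + 1 / (1 + 1 / tailValue) ∧
      rightCF (reflect α) < 2 + 1 / (1 + 1 / tailValue) := by
  obtain ⟨⟨-, -, h0, h1, h2, h3⟩, -, -, -, -, -, h4, -, -, h5, -, -, -⟩ := hm
  have hx := one_le_rightCF (h.recentered 5).binary.pos
  have hy := one_le_rightCF h.reflected.binary.pos
  have e1 := lambdaVal_add h.binary.pos 0
  have e2 := lambdaVal_add h.binary.pos 5
  have r1 := h.binary.rightCF_eq_wordBound (l := [2, 1, 1, 1, 1]) ⟨h0, h1, h2, h3, h4, trivial⟩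
  have r2 := (h.recentered 5).reflected.binary.rightCF_eq_wordBound (l := [2, 1, 1, 1, 1])
    ⟨h5, h4, h3, h2, h1, trivial⟩
  have l1 := h.lambdaVal_lt 0
  have l2 := h.lambdaVal_lt 5
  have hr' : recenter 5 (reflect (recenter 5 α)) = reflect α := by ext n; simp
  rw [recenter_zero, h0] at e1
  have h5' : α 5 = 2 := h5
  rw [h5'] at e2
  simp only [wordBound, List.length, Nat.reduceAdd, Nat.cast_ofNat, Nat.cast_one, hr']
    at r1 r2 e1 e2
  constructor <;> by_contra! hle
  · rcases le_total (rightCF (reflect α)) (rightCF (recenter 5 α)) with hyx | hyx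
    · linarith [gapRight_le_of_tail hy hyx hle]
    · linarith [gapRight_le_of_tail hx hyx (hle.trans hyx)]
  · rcases le_total (rightCF (reflect α)) (rightCF (recenter 5 α)) with hyx | hyx
    · linarith [gapRight_le_of_tail hy hyx (hle.trans hyx)]
    · linarith [gapRight_le_of_tail hx hyx hle]

/-- Behind the context of a marker, a mirrored marker follows on the left. -/
lemma hasMarker_reflect (h : IsAdmissible α) (hm : HasMarker α) :
    HasMarker (reflect (recenter (-5) α)) := by
  have hc := h.markerContext hm
  have hlt := (h.rightCF_lt_of_markerContext hc).2
  obtain ⟨⟨h₂, h₁, h0, -, -, -⟩, h₇, h₆, h₅, h₄, h₃, -, -⟩ := hc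
  refine ⟨h₃, h₄, h₅, h₆, h₇, h.binary.eq_one fun h₈ => hlt.not_ge ?_⟩
  have hT := tailValue_bounds.1
  have hx := (h.reflected.recentered 8).tailValue_le_rightCF h₆ h₇ h₈
  have heq := h.reflected.binary.rightCF_eq_wordBound (l := [2, 1, 2, 2, 1, 2, 1, 1])
    ⟨h0, h₁, h₂, h₃, h₄, h₅, h₆, h₇, trivial⟩
  simp only [wordBound, List.length, Nat.reduceAdd, Nat.cast_ofNat, Nat.cast_one] at heq
  rw [heq, ← tailValue_fixed]
  have : 0 < tailValue := by linarith
  have : 0 < rightCF (recenter 8 (reflect α)) := by linarith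
  gcongr

lemma hasMarker_recenter_sub_ten (h : IsAdmissible α) (hm : HasMarker α) :
    HasMarker (recenter (-10) α) := by
  have := ((h.recentered (-5)).reflected.markerContext (h.hasMarker_reflect hm)).marker_five
  convert this using 1
  ext n
  simp only [recenter_apply, reflect_apply]
  congr 1
  ring

lemma hasMarker_recenter_add_ten (h : IsAdmissible α) (hm : HasMarker α) :
    HasMarker (recenter 10 α) := by
  have := (h.recentered 5).reflected.hasMarker_reflect (h.markerContext hm).marker_five
  convert this using 1
  ext n
  simp only [recenter_apply, reflect_apply]
  congr 1
  ring

end IsAdmissible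

/-! ### The isolated point -/

/-- The periodic sequence of period `2111121221`. -/
def isolatedSeq : ℤ → ℕ := fun n =>
  if n % 10 = 0 ∨ n % 10 = 5 ∨ n % 10 = 7 ∨ n % 10 = 8 then 2 else 1

lemma IsAdmissible.eq_isolatedSeq {α : ℤ → ℕ} (h : IsAdmissible α) (hm : HasMarker α) :
    α = isolatedSeq := by
  have markers : ∀ n : ℤ, HasMarker (recenter (10 * n) α) := by
    intro n
    induction n using Int.induction_on with
    | zero => simpa using hm
    | succ n ih =>
      convert (h.recentered _).hasMarker_recenter_add_ten ih using 1
      rw [recenter_recenter]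
      congr 1
      ring
    | pred n ih =>
      convert (h.recentered _).hasMarker_recenter_sub_ten ih using 1
      rw [recenter_recenter]
      congr 1
      ring
  ext m
  have hβ := h.recentered (10 * (m / 10))
  have hc := hβ.markerContext (markers (m / 10))
  have hc' := (hβ.recentered 5).reflected.markerContext hc.marker_five
  obtain ⟨⟨-, -, h0, h1, h2, h3⟩, -, -, -, -, -, h4, ⟨h7, h6, h5, -, -, -⟩⟩ := hc
  have h8 := hc'.at_neg_three
  have h9 := hc'.at_neg_four
  simp only [recenter_apply, reflect_apply, neg_neg, neg_zero, zero_add, Int.reduceAdd]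
    at h0 h1 h2 h3 h4 h5 h6 h7 h8 h9
  have hlt := Int.emod_lt_of_pos m (by norm_num : (0 : ℤ) < 10)
  have hge := Int.emod_nonneg m (by norm_num : (10 : ℤ) ≠ 0)
  have hdiv : m = m % 10 + 10 * (m / 10) := (Int.emod_add_mul_ediv m 10).symm
  generalize m / 10 = d at *
  unfold isolatedSeq
  generalize m % 10 = r at *
  subst hdiv
  interval_cases r <;> simpa

lemma isBinary_isolatedSeq : IsBinary isolatedSeq := fun n => by
  unfold isolatedSeq
  split_ifs <;> simp

lemma recenter_isolatedSeq {k : ℤ} (hk : k % 10 = 0) : recenter k isolatedSeq = isolatedSeq := by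
  ext n
  simp only [recenter_apply, isolatedSeq, show (n + k) % 10 = n % 10 by omega]

lemma reflect_isolatedSeq : reflect isolatedSeq = recenter 5 isolatedSeq := by
  ext n
  simp only [recenter_apply, reflect_apply, isolatedSeq]
  congr 1
  apply propext
  omega

lemma rightCF_isolatedSeq_add :
    rightCF isolatedSeq + rightCF (recenter 5 isolatedSeq) - 2 = √33245 / 55 := by
  have hb := isBinary_isolatedSeq
  have hx := one_le_rightCF hb.pos
  have hy := one_le_rightCF (hb.recentered 5).pos
  have r1 := hb.rightCF_eq_wordBound (l := [2, 1, 1, 1, 1]) (by simp [Reads, isolatedSeq])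
  have r2 := (hb.recentered 5).rightCF_eq_wordBound (l := [2, 1, 2, 2, 1])
    (by simp [Reads, isolatedSeq])
  simp only [wordBound, List.length, Nat.reduceAdd, Nat.cast_ofNat, Nat.cast_one,
    recenter_recenter, Int.reduceAdd, recenter_isolatedSeq (k := 10) (by norm_num)] at r1 r2
  set x := rightCF isolatedSeq
  set y := rightCF (recenter 5 isolatedSeq)
  have r1' : x * (5 * y + 3) = 13 * y + 8 := by
    rw [r1]; field_simp; ring
  have r2' : y * (10 * x + 7) = 27 * x + 19 := by
    rw [r2]; field_simp; ring
  have hq : 55 * x ^ 2 - 105 * x - 101 = 0 := by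
    have : 3 * (55 * x ^ 2 - 105 * x - 101) = 0 := by
      linear_combination (10 * x + 7) * r1' - (5 * x - 13) * r2'
    linarith
  have hyx : y = x + 1 / 11 := by
    have : (y - (x + 1 / 11)) * (10 * x + 7) = 0 := by
      linear_combination r2' - (2 / 11) * hq
    rcases mul_eq_zero.1 this with h | h <;> linarith
  have hs : √33245 = 110 * x - 105 := by
    rw [Real.sqrt_eq_iff_mul_self_eq (by norm_num) (by nlinarith)]
    linear_combination (-220) * hq
  rw [hs, hyx]
  ring

/-! ### Values of `λ` away from the gap -/

namespace IsBinary

variable {α : ℤ → ℕ}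

lemma lambdaVal_le_of_eq_one (h : IsBinary α) {k : ℤ} (hk : α k = 1) : lambdaVal α k ≤ 3.3 :=
  (h.lambdaVal_mem_Icc (u := []) (v := [1]) trivial (by simpa [Reads])).2.trans
    (by norm_num [wordBound])

lemma lambdaVal_le_of_next_eq_two (h : IsBinary α) {k : ℤ} (hk : α (k + 1) = 2) :
    lambdaVal α k ≤ 3.3 := by
  rcases h k with h1 | h2
  · exact h.lambdaVal_le_of_eq_one h1
  · exact (h.lambdaVal_mem_Icc (u := []) (v := [2, 2]) trivial
      ⟨by simpa, by simpa [add_comm], trivial⟩).2.trans (by norm_num [wordBound])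

lemma lambdaVal_le_of_prev_eq_two (h : IsBinary α) {k : ℤ} (hk : α (k - 1) = 2) :
    lambdaVal α k ≤ 3.3 := by
  have := h.reflected.lambdaVal_le_of_next_eq_two (k := -k) (by
    rwa [reflect_apply, show -(-k + 1) = k - 1 by ring])
  rwa [lambdaVal_reflect h.pos, neg_neg] at this

lemma lambdaVal_le_of_window (h : IsBinary α) {k : ℤ} (h₃ : α (k - 3) = 2) (h₂ : α (k - 2) = 2)
    (h₁ : α (k - 1) = 1) (h0 : α k = 2) (h1 : α (k + 1) = 1) (h2 : α (k + 2) = 1)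
    (h3 : α (k + 3) = 2) : lambdaVal α k ≤ 3.3 := by
  refine (h.lambdaVal_mem_Icc (u := [1, 2, 2]) (v := [2, 1, 1, 2]) ?_ ?_).2.trans
    (by norm_num [wordBound])
  · refine ⟨?_, ?_, ?_, trivial⟩
    · simpa using h₁
    · convert h₂ using 1; simp; congr 1; ring
    · convert h₃ using 1; simp; congr 1; ring
  · refine ⟨?_, ?_, ?_, ?_, trivial⟩
    · simpa using h0
    · convert h1 using 1; simp; congr 1; ring
    · convert h2 using 1; simp; congr 1; ring
    · convert h3 using 1; simp; congr 1; ring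

lemma mem_markovSpectrum (h : IsBinary α) {v : ℝ} (hle : ∀ k, lambdaVal α k ≤ v) {j : ℤ}
    (hj : lambdaVal α j = v) : v ∈ markovSpectrum ∧ markovValue α = v := by
  have hbdd : BddAbove (range (lambdaVal α)) := ⟨v, by rintro _ ⟨k, rfl⟩; exact hle k⟩
  have hm : markovValue α = v := le_antisymm (ciSup_le hle) (hj ▸ le_ciSup hbdd j)
  exact ⟨⟨α, h.pos, hbdd, hm⟩, hm⟩

end IsBinary

lemma isolated_value_bounds : gapLeft < √33245 / 55 ∧ √33245 / 55 < gapRight := by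
  have h1 : 182.3 < √33245 := Real.lt_sqrt_of_sq_lt (by norm_num)
  have h2 : √33245 < 182.3325 := (Real.sqrt_lt' (by norm_num)).2 (by norm_num)
  exact ⟨by linarith [gapLeft_lt], by linarith [lt_gapRight]⟩

lemma isolatedSeq_markov :
    √33245 / 55 ∈ markovSpectrum ∧ markovValue isolatedSeq = √33245 / 55 := by
  have hb := isBinary_isolatedSeq
  have hv := rightCF_isolatedSeq_add
  have hlow : 3.3 ≤ √33245 / 55 := by linarith [isolated_value_bounds.1, lt_gapLeft]
  have max_zero : ∀ k : ℤ, k % 10 = 0 → lambdaVal isolatedSeq k = √33245 / 55 := by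
    intro k hk
    have := lambdaVal_add hb.pos k
    rw [recenter_isolatedSeq hk, reflect_isolatedSeq,
      show isolatedSeq k = 2 by simp [isolatedSeq, hk]] at this
    push_cast at this
    linarith
  refine hb.mem_markovSpectrum (fun k => ?_) (max_zero 0 rfl)
  have hcases : k % 10 = 0 ∨ k % 10 = 5 ∨ k % 10 = 7 ∨ k % 10 = 8 ∨
      ¬ (k % 10 = 0 ∨ k % 10 = 5 ∨ k % 10 = 7 ∨ k % 10 = 8) := by omega
  rcases hcases with hk | hk | hk | hk | hk
  · exact (max_zero k hk).le
  · have := lambdaVal_reflect hb.pos (-k)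
    rw [reflect_isolatedSeq, lambdaVal_recenter hb.pos, neg_neg] at this
    rw [← this, max_zero _ (by omega)]
  · refine (hb.lambdaVal_le_of_next_eq_two ?_).trans hlow
    simp [isolatedSeq, show (k + 1) % 10 = 8 by omega]
  · refine (hb.lambdaVal_le_of_prev_eq_two ?_).trans hlow
    simp [isolatedSeq, show (k - 1) % 10 = 7 by omega]
  · exact (hb.lambdaVal_le_of_eq_one (if_neg hk)).trans hlow

/-! ### Uniqueness inside the gap -/

namespace IsAdmissible

variable {α : ℤ → ℕ}

lemma lambdaVal_le_gapLeft (h : IsAdmissible α) (h₂ : α (-2) = 2) (h₁ : α (-1) = 1)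
    (h0 : α 0 = 2) (h1 : α 1 = 1) (h2 : α 2 = 1) (h3 : α 3 = 2) :
    lambdaVal α 0 ≤ gapLeft := by
  by_contra! hgt
  have hT := tailValue_bounds.1
  have h₃ : α (-3) = 1 := h.binary.eq_one fun h₃ => by
    linarith [lt_gapLeft, h.binary.lambdaVal_le_of_window (k := 0) h₃ h₂ h₁ h0 h1 h2 h3]
  have h₄ : α (-4) = 1 :=
    (h.reflected.recentered 2).not_two_one_two_one_two h0 h₁ h₂ h₃
  have h₅ : α (-5) = 2 := h.binary.eq_two fun h₅ => by
    have h1' : α 1 = 2 := (h.reflected.recentered 2).at_neg_three_of_hasMarker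
      ⟨h0, h₁, h₂, h₃, h₄, h₅⟩
    omega
  have hx := (h.recentered 3).tailValue_le_rightCF h1 h2 h3
  have hy := (h.reflected.recentered 5).tailValue_le_rightCF h₃ h₄ h₅
  have r1 := h.binary.rightCF_eq_wordBound (l := [2, 1, 1]) ⟨h0, h1, h2, trivial⟩
  have r2 := h.reflected.binary.rightCF_eq_wordBound (l := [2, 1, 2, 1, 1])
    ⟨h0, h₁, h₂, h₃, h₄, trivial⟩
  simp only [wordBound, List.length, Nat.reduceAdd, Nat.cast_ofNat, Nat.cast_one] at r1 r2
  have e := lambdaVal_add h.binary.pos 0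
  rw [recenter_zero, h0, r1, r2] at e
  push_cast at e
  refine hgt.not_ge ?_
  have hT0 : 0 < tailValue := by linarith
  have hx0 : 0 < rightCF (recenter 3 α) := by linarith
  have hy0 : 0 < rightCF (recenter 5 (reflect α)) := by linarith
  have hle : 2 + 1 / (1 + 1 / (1 + 1 / rightCF (recenter 3 α))) +
        1 / (1 + 1 / (2 + 1 / (1 + 1 / (1 + 1 / rightCF (recenter 5 (reflect α)))))) ≤ gapLeft := by
    rw [gapLeft_eq]
    gcongr
  linarith

lemma markovValue_of_hasMarker (h : IsAdmissible α) (hm : HasMarker α) :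
    markovValue α = √33245 / 55 := by
  rw [h.eq_isolatedSeq hm]
  exact isolatedSeq_markov.2

lemma markovValue_of_gapLeft_lt (h : IsAdmissible α) (hgt : gapLeft < lambdaVal α 0) :
    markovValue α = √33245 / 55 := by
  have hlow := lt_gapLeft
  have h0 : α 0 = 2 := h.binary.eq_two fun h0 => by
    linarith [h.binary.lambdaVal_le_of_eq_one h0]
  have h1 : α 1 = 1 := h.binary.eq_one fun h1 => by
    linarith [h.binary.lambdaVal_le_of_next_eq_two (k := 0) h1]
  have h₁ : α (-1) = 1 := h.binary.eq_one fun h₁ => by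
    linarith [h.binary.lambdaVal_le_of_prev_eq_two (k := 0) h₁]
  rcases h.binary (-2) with h₂ | h₂ <;> rcases h.binary 2 with h2 | h2
  · have := (h.binary.lambdaVal_mem_Icc (k := 0) (u := [1, 1]) (v := [2, 1, 1])
      ⟨h₁, h₂, trivial⟩ ⟨h0, h1, h2, trivial⟩).2
    norm_num [wordBound] at this
    linarith
  · have h₃ : α (-3) = 1 := h.binary.eq_one fun h₃ => by
      have := h.reflected.lambdaVal_le_gapLeft h2 h1 h0 h₁ h₂ h₃
      rw [lambdaVal_reflect h.binary.pos] at this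
      exact hgt.not_ge this
    rw [← markovValue_reflect h.binary.pos]
    exact h.reflected.markovValue_of_hasMarker ⟨h2, h1, h0, h₁, h₂, h₃⟩
  · have h3 : α 3 = 1 := h.binary.eq_one fun h3 =>
      hgt.not_ge (h.lambdaVal_le_gapLeft h₂ h₁ h0 h1 h2 h3)
    exact h.markovValue_of_hasMarker ⟨h₂, h₁, h0, h1, h2, h3⟩
  · have := h.not_two_one_two_one_two h₂ h₁ h0 h1
    omega

end IsAdmissible

lemma isBinary_of_lambdaVal_lt {α : ℤ → ℕ} (hpos : ∀ n, 0 < α n)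
    (h : ∀ k, lambdaVal α k < gapRight) : IsBinary α := by
  have hU := gapRight_lt
  have head_lt : ∀ k : ℤ, (α k : ℝ) < lambdaVal α k := by
    intro k
    have h1 := one_le_rightCF (α := recenter (k + 1) α) fun n => hpos _
    have h2 := one_le_rightCF (α := reflect (recenter (k - 1) α)) fun n => hpos _
    rw [lambdaVal_eq hpos, rightCF_eq (α := recenter k α) fun n => hpos _, recenter_recenter,
      add_comm 1 k]
    have : 0 < 1 / rightCF (recenter (k + 1) α) := by positivity
    have : 0 < 1 / rightCF (reflect (recenter (k - 1) α)) := by positivity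
    simp only [recenter_apply, zero_add]
    linarith
  have le_three : ∀ k, α k ≤ 3 := by
    intro k
    by_contra! hk
    have : (4 : ℝ) ≤ α k := by exact_mod_cast hk
    linarith [h k, head_lt k]
  have upper : ∀ β : ℤ → ℕ, (∀ n, 0 < β n) → (∀ n, β n ≤ 3) → rightCF β ≤ 4 := by
    intro β hβ hβ3
    have h1 := one_le_rightCF (α := recenter 1 β) fun n => hβ _
    have h2 := div_le_one_of_le₀ h1 (by linarith)
    have h3 : (β 0 : ℝ) ≤ 3 := by exact_mod_cast hβ3 0
    rw [rightCF_eq hβ]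
    linarith
  intro k
  by_contra hk
  have hk3 : α k = 3 := by have := le_three k; have := hpos k; omega
  have e := lambdaVal_eq hpos k
  rw [rightCF_eq (α := recenter k α) fun n => hpos _, recenter_recenter] at e
  simp only [recenter_apply, zero_add, hk3] at e
  push_cast at e
  have h1 := one_le_rightCF (α := recenter (1 + k) α) fun n => hpos _
  have h2 := one_le_rightCF (α := reflect (recenter (k - 1) α)) fun n => hpos _
  have h3 := one_div_le_one_div_of_le (by linarith)
    (upper (recenter (1 + k) α) (fun n => hpos _) fun n => le_three _)
  have h4 := one_div_le_one_div_of_le (by linarith)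
    (upper (reflect (recenter (k - 1) α)) (fun n => hpos _) fun n => le_three _)
  linarith [h k]

lemma eq_of_mem_markovSpectrum {x : ℝ} (hx : x ∈ markovSpectrum) (hl : gapLeft < x)
    (hr : x < gapRight) : x = √33245 / 55 := by
  obtain ⟨α, hpos, hbdd, rfl⟩ := hx
  have hlt : ∀ k, lambdaVal α k < gapRight := fun k => (le_ciSup hbdd k).trans_lt hr
  have hα : IsAdmissible α := ⟨isBinary_of_lambdaVal_lt hpos hlt, hlt⟩
  obtain ⟨k, hk⟩ := exists_lt_of_lt_ciSup hl
  rw [← markovValue_recenter hpos k]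
  exact (hα.recentered k).markovValue_of_gapLeft_lt (by
    rwa [lambdaVal_recenter hpos, zero_add])

/-! ### The end points -/

/-- The sequence that is symmetric under `n ↦ -c - n`, and whose right half is
`2, 1, ..., 1` followed from position `s` on by the period `221211`. -/
def mirrorSeq (c s : ℤ) : ℤ → ℕ := fun n =>
  if max n (-c - n) = 0 ∨ s ≤ max n (-c - n) ∧
    ((max n (-c - n) - s) % 6 = 0 ∨ (max n (-c - n) - s) % 6 = 1 ∨ (max n (-c - n) - s) % 6 = 3)
  then 2 else 1

section mirrorSeq

variable {c s : ℤ}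

lemma isBinary_mirrorSeq : IsBinary (mirrorSeq c s) := fun n => by
  unfold mirrorSeq
  split_ifs <;> simp

lemma mirrorSeq_sub (n : ℤ) : mirrorSeq c s (-c - n) = mirrorSeq c s n := by
  simp only [mirrorSeq, sub_sub_cancel, max_comm]

lemma lambdaVal_mirrorSeq_sub (k : ℤ) :
    lambdaVal (mirrorSeq c s) (-c - k) = lambdaVal (mirrorSeq c s) k := by
  have hpos := (isBinary_mirrorSeq (c := c) (s := s)).pos
  have h : reflect (mirrorSeq c s) = recenter (-c) (mirrorSeq c s) := by
    ext n
    rw [recenter_apply, reflect_apply, ← mirrorSeq_sub]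
    congr 1
    ring
  have := lambdaVal_reflect hpos (-k)
  rwa [h, lambdaVal_recenter hpos, neg_neg, add_comm, ← sub_eq_add_neg] at this

lemma mirrorSeq_eq_two (hc : 0 < c) (hs : 0 < s) {n : ℤ} (hn : s ≤ n)
    (h : (n - s) % 6 = 0 ∨ (n - s) % 6 = 1 ∨ (n - s) % 6 = 3) : mirrorSeq c s n = 2 := by
  have hmax : max n (-c - n) = n := by omega
  simp only [mirrorSeq, hmax]
  exact if_pos (Or.inr ⟨hn, h⟩)

lemma mirrorSeq_eq_one (hc : 0 < c) (hs : 0 < s) {n : ℤ} (hn : s ≤ n)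
    (h : (n - s) % 6 = 2 ∨ (n - s) % 6 = 4 ∨ (n - s) % 6 = 5) : mirrorSeq c s n = 1 := by
  have hmax : max n (-c - n) = n := by omega
  simp only [mirrorSeq, hmax]
  exact if_neg (by omega)

lemma rightCF_mirrorSeq (hc : 0 < c) (hs : 0 < s) :
    rightCF (recenter s (mirrorSeq c s)) = tailValue := by
  have hb := (isBinary_mirrorSeq (c := c) (s := s)).recentered s
  have hx := one_le_rightCF hb.pos
  have heq := hb.rightCF_eq_wordBound (l := [2, 2, 1, 2, 1, 1]) (by
    refine ⟨?_, ?_, ?_, ?_, ?_, ?_, trivial⟩ <;>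
    first
    | exact mirrorSeq_eq_two hc hs (by omega) (by omega)
    | exact mirrorSeq_eq_one hc hs (by omega) (by omega))
  have hper : rightCF (recenter 6 (recenter s (mirrorSeq c s)))
      = rightCF (recenter s (mirrorSeq c s)) := by
    refine rightCF_congr fun n => ?_
    simp only [recenter_apply]
    rcases (by omega : (n : ℤ) % 6 = 0 ∨ (n : ℤ) % 6 = 1 ∨ (n : ℤ) % 6 = 3 ∨
      (n : ℤ) % 6 = 2 ∨ (n : ℤ) % 6 = 4 ∨ (n : ℤ) % 6 = 5) with h | h | h | h | h | h
    iterate 3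
      · rw [mirrorSeq_eq_two hc hs (by omega) (by omega),
          mirrorSeq_eq_two hc hs (by omega) (by omega)]
    iterate 3
      · rw [mirrorSeq_eq_one hc hs (by omega) (by omega),
          mirrorSeq_eq_one hc hs (by omega) (by omega)]
  simp only [wordBound, List.length, Nat.reduceAdd, Nat.cast_ofNat, Nat.cast_one, hper] at heq
  set x := rightCF (recenter s (mirrorSeq c s))
  have hq : 19 * x ^ 2 - 34 * x - 26 = 0 := by
    have h' : x * (19 * x + 11) = 45 * x + 26 := by
      nth_rewrite 1 [heq]
      field_simp
      ring
    linear_combination h'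
  have hsqrt : √87 = (19 * x - 17) / 3 := by
    rw [Real.sqrt_eq_iff_mul_self_eq (by norm_num) (by nlinarith)]
    linear_combination (-19 / 9) * hq
  rw [tailValue, hsqrt]
  ring

lemma lambdaVal_mirrorSeq_le (hc : 0 < c) (hs : 0 < s) {k : ℤ} (hk : k ≠ 0) (hkc : k ≠ -c) :
    lambdaVal (mirrorSeq c s) k ≤ 3.3 := by
  wlog hle : -c - k ≤ k generalizing k
  · rw [← lambdaVal_mirrorSeq_sub]
    exact this (by omega) (by omega) (by omega)
  have hb := isBinary_mirrorSeq (c := c) (s := s)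
  by_cases hks : s ≤ k
  · rcases (by omega : (k - s) % 6 = 0 ∨ (k - s) % 6 = 1 ∨ (k - s) % 6 = 3 ∨
      ((k - s) % 6 = 2 ∨ (k - s) % 6 = 4 ∨ (k - s) % 6 = 5)) with h | h | h | h
    · exact hb.lambdaVal_le_of_next_eq_two (mirrorSeq_eq_two hc hs (by omega) (by omega))
    · exact hb.lambdaVal_le_of_prev_eq_two (mirrorSeq_eq_two hc hs (by omega) (by omega))
    · apply hb.lambdaVal_le_of_window <;>
      first
      | exact mirrorSeq_eq_two hc hs (by omega) (by omega)
      | exact mirrorSeq_eq_one hc hs (by omega) (by omega)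
    · exact hb.lambdaVal_le_of_eq_one (mirrorSeq_eq_one hc hs hks h)
  · refine hb.lambdaVal_le_of_eq_one (if_neg ?_)
    rw [max_eq_left hle]
    omega

lemma lambdaVal_mirrorSeq_mem (hc : 0 < c) (hs : 0 < s) {v : ℝ} (hv : 3.3 ≤ v)
    (h0 : lambdaVal (mirrorSeq c s) 0 = v) : v ∈ markovSpectrum := by
  refine (isBinary_mirrorSeq.mem_markovSpectrum (fun k => ?_) h0).1
  by_cases hk : k = 0
  · rw [hk, h0]
  by_cases hkc : k = -c
  · rw [hkc, ← sub_zero (-c), lambdaVal_mirrorSeq_sub, h0]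
  · exact (lambdaVal_mirrorSeq_le hc hs hk hkc).trans hv

lemma rightCF_mirrorSeq_left :
    rightCF (recenter (c - 1) (reflect (recenter (0 - 1) (mirrorSeq c s))))
      = rightCF (recenter 0 (mirrorSeq c s)) := by
  refine rightCF_congr fun n => ?_
  simp only [recenter_apply, reflect_apply]
  rw [← mirrorSeq_sub]
  congr 1
  ring

end mirrorSeq

lemma gapLeft_mem_markovSpectrum : gapLeft ∈ markovSpectrum := by
  refine lambdaVal_mirrorSeq_mem (c := 2) (s := 3) (by norm_num) (by norm_num)
    (by linarith [lt_gapLeft]) ?_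
  have hb := isBinary_mirrorSeq (c := 2) (s := 3)
  have r1 := (hb.recentered 0).rightCF_eq_wordBound (l := [2, 1, 1]) (by simp [Reads, mirrorSeq])
  have r2 := (hb.recentered (0 - 1)).reflected.rightCF_eq_wordBound (l := [1])
    (by simp [Reads, mirrorSeq])
  have hleft := rightCF_mirrorSeq_left (c := 2) (s := 3)
  have hright := rightCF_mirrorSeq (c := 2) (s := 3) (by norm_num) (by norm_num)
  norm_num only [wordBound, List.length, recenter_recenter] at r1 r2 hleft hright
  rw [lambdaVal_eq hb.pos, gapLeft_eq]
  norm_num only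
  rw [r2, hleft, r1, hright]

lemma gapRight_mem_markovSpectrum : gapRight ∈ markovSpectrum := by
  refine lambdaVal_mirrorSeq_mem (c := 5) (s := 2) (by norm_num) (by norm_num)
    (by linarith [lt_gapRight]) ?_
  have hb := isBinary_mirrorSeq (c := 5) (s := 2)
  have r1 := (hb.recentered 0).rightCF_eq_wordBound (l := [2, 1]) (by simp [Reads, mirrorSeq])
  have r2 := (hb.recentered (0 - 1)).reflected.rightCF_eq_wordBound (l := [1, 1, 1, 1])
    (by simp [Reads, mirrorSeq])
  have hleft := rightCF_mirrorSeq_left (c := 5) (s := 2)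
  have hright := rightCF_mirrorSeq (c := 5) (s := 2) (by norm_num) (by norm_num)
  norm_num only [wordBound, List.length, recenter_recenter] at r1 r2 hleft hright
  rw [lambdaVal_eq hb.pos, gapRight_eq]
  norm_num only
  rw [r2, hleft, r1, hright]

/-- The intersection of the Markov spectrum with the open interval consists of
exactly one (hence isolated) point, and both endpoints belong to the Markov
spectrum. -/
theorem markov_gap_12 :
    markovSpectrum ∩ Ioo ((11 + 35 * Real.sqrt 87) / 102) ((56508 + 2716 * Real.sqrt 87) / 24687) = {(Real.sqrt 33245 / 55 : ℝ)} ∧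
    ((11 + 35 * Real.sqrt 87) / 102) ∈ markovSpectrum ∧ ((56508 + 2716 * Real.sqrt 87) / 24687) ∈ markovSpectrum := by
  refine ⟨Set.ext fun x => ⟨?_, ?_⟩, gapLeft_mem_markovSpectrum, gapRight_mem_markovSpectrum⟩
  · rintro ⟨hx, hl, hr⟩
    exact eq_of_mem_markovSpectrum hx hl hr
  · rintro rfl
    exact ⟨isolatedSeq_markov.1, isolated_value_bounds⟩
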